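/- Let (X, Y) be a solution of the subsystem defined on [s₀, ∞) with 0 < X(s₀) < 1/d and 0 < Y(s₀) < 1/d. Then there exists s₂ ≥ s₀ such that for all s > s₂ one has 2dX(s) − d(d+1)X(s)² − d(d−1)Y(s)² > 0 (i.e. the renormalized scalar curvature ℛ restricted to the subsystem is eventually positive). -/

import Mathlib

open Filter Topology

/-- `(X, Y)` solves the planar subsystem
`X' = X(dX² − 1) + (d−1)Y²`, `Y' = XY(dX − 1)` on the set `I`. -/
def IsSubsystemSol (d : ℕ) (X Y : ℝ → ℝ) (I : Set ℝ) : Prop :=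
  (∀ s ∈ I, HasDerivAt X (X s * ((d : ℝ) * X s ^ 2 - 1) + ((d : ℝ) - 1) * Y s ^ 2) s) ∧
  (∀ s ∈ I, HasDerivAt Y (X s * Y s * ((d : ℝ) * X s - 1)) s)

/-!
The rectangle `0 < X < 1/d`, `|Y| ≤ 1/d` is forward invariant: `X > 0` persists on its own,
`Y²` decreases as long as `0 < X < 1/d`, and `X` cannot reach `1/d` as long as `|Y| ≤ 1/d`.
Along a solution,
`X' = X (1 - X) (1 - d X) - ℛ / d` and `ℛ' = 2 d X (1 - d X)² + (2 d X + 2 d X² - 2) ℛ`.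
The second identity gives `ℛ' ≥ -2 ℛ` wherever `ℛ ≥ 0` in the rectangle, so `ℛ` stays positive once
it is positive. If `ℛ` were never positive, then `X` would stay away from `1/d`, and the first
identity would make `X` grow exponentially.
-/

section Gronwall

open Set

variable {f f' : ℝ → ℝ} {a b K : ℝ}

theorem mul_exp_le_of_mul_le_deriv_right (hab : a ≤ b) (hf : ContinuousOn f (Icc a b))
    (hf' : ∀ s ∈ Ico a b, HasDerivWithinAt f (f' s) (Ici s) s)
    (bound : ∀ s ∈ Ico a b, K * f s ≤ f' s) :
    f a * Real.exp (K * (b - a)) ≤ f b := by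
  have neg_le := le_gronwallBound_of_liminf_deriv_right_le (f := fun s ↦ -f s)
    (f' := fun s ↦ -f' s) (K := K) (ε := 0) hf.neg
    (fun s hs _ ↦ (hf' s hs).fun_neg.liminf_right_slope_le) le_rfl
    (fun s hs ↦ by linarith [bound s hs]) b (right_mem_Icc.2 hab)
  rw [gronwallBound_ε0] at neg_le
  linarith

/-- The differential inequality at time `s` may be derived from positivity on all of `[a, s]`,
rather than at `s` alone: this allows bootstrap arguments. -/
theorem pos_of_mul_le_deriv (hf : ∀ s ∈ Ici a, HasDerivWithinAt f (f' s) (Ici a) s)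
    (ha : 0 < f a) (bound : ∀ s ∈ Ici a, (∀ t ∈ Icc a s, 0 < f t) → K * f s ≤ f' s) :
    ∀ s ∈ Ici a, 0 < f s := by
  by_contra! ⟨s, has, hs⟩
  have hcont : ContinuousOn f (Ici a) := HasDerivWithinAt.continuousOn hf
  have hclosed : IsClosed (Icc a s ∩ f ⁻¹' Iic 0) :=
    (hcont.mono Icc_subset_Ici_self).preimage_isClosed_of_isClosed isClosed_Icc isClosed_Iic
  obtain ⟨T, ⟨⟨haT, hTs⟩, hT⟩, hleast⟩ :=
    (isCompact_Icc.of_isClosed_subset hclosed inter_subset_left).exists_isLeast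
      ⟨s, right_mem_Icc.2 has, hs⟩
  have pos_before : ∀ t ∈ Ico a T, 0 < f t := fun t ht ↦
    not_le.1 fun hft ↦ ht.2.not_ge (hleast ⟨⟨ht.1, ht.2.le.trans hTs⟩, hft⟩)
  have hexp := mul_exp_le_of_mul_le_deriv_right haT (hcont.mono Icc_subset_Ici_self)
    (fun t ht ↦ (hf t ht.1).mono (Ici_subset_Ici.2 ht.1))
    (fun t ht ↦ bound t ht.1 fun u hu ↦ pos_before u ⟨hu.1, hu.2.trans_lt ht.2⟩)
  exact (mul_pos ha (Real.exp_pos _)).not_ge (hexp.trans hT)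

end Gronwall

/-- The renormalized scalar curvature `ℛ` restricted to the subsystem, as a function on the
`(X, Y)`-plane. -/
def scalarCurvature (d x y : ℝ) : ℝ :=
  2 * d * x - d * (d + 1) * x ^ 2 - d * (d - 1) * y ^ 2

theorem two_le_mul_one_sub_of_scalarCurvature_nonpos {d x y : ℝ} (hd : 1 ≤ d) (hx : d * x < 1)
    (hy : (d * y) ^ 2 ≤ 1) (hR : scalarCurvature d x y ≤ 0) : 2 ≤ (d + 1) * (1 - d * x) := by
  have key : (1 - d * x) * ((d + 1) * (1 - d * x) - 2) =
      (d - 1) * (1 - (d * y) ^ 2) + d * -scalarCurvature d x y := by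
    unfold scalarCurvature; ring
  have hnonneg : 0 ≤ (1 - d * x) * ((d + 1) * (1 - d * x) - 2) := by
    rw [key]
    exact add_nonneg (mul_nonneg (by linarith) (by linarith))
      (mul_nonneg (by linarith) (by linarith))
  linarith [nonneg_of_mul_nonneg_right hnonneg (sub_pos.2 hx)]

theorem sq_mul_le_of_scalarCurvature_nonpos {d x y : ℝ} (hd : 1 ≤ d) (hx : 0 ≤ x)
    (hdx : d * x < 1) (hy : (d * y) ^ 2 ≤ 1) (hR : scalarCurvature d x y ≤ 0) :
    (2 / (d + 1)) ^ 2 * x ≤ x * (d * x ^ 2 - 1) + (d - 1) * y ^ 2 := by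
  have hd₀ : 0 < d := by linarith
  have hgap : 2 / (d + 1) ≤ 1 - d * x :=
    (div_le_iff₀' (by linarith)).2 (two_le_mul_one_sub_of_scalarCurvature_nonpos hd hdx hy hR)
  have hgap' : 2 / (d + 1) ≤ 1 - x := by linarith [le_mul_of_one_le_left hx hd]
  calc (2 / (d + 1)) ^ 2 * x = x * (2 / (d + 1) * (2 / (d + 1))) := by ring
    _ ≤ x * ((1 - x) * (1 - d * x)) := by
      gcongr
      exact (by positivity : 0 ≤ 2 / (d + 1)).trans hgap'
    _ ≤ x * ((1 - x) * (1 - d * x)) - scalarCurvature d x y / d :=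
      le_sub_self_iff _ |>.2 (div_nonpos_of_nonpos_of_nonneg hR hd₀.le)
    _ = x * (d * x ^ 2 - 1) + (d - 1) * y ^ 2 := by
      unfold scalarCurvature; field_simp; ring

/-- `(X, Y)` solves the planar subsystem on `I`, for a real parameter `d` in place of the integer
dimension and with derivatives taken within `I`, hence one-sided at an end point of `I`. -/
structure IsSubsystemSolWithin (d : ℝ) (X Y : ℝ → ℝ) (I : Set ℝ) : Prop where
  hasDerivWithinAt_fst : ∀ s ∈ I,
    HasDerivWithinAt X (X s * (d * X s ^ 2 - 1) + (d - 1) * Y s ^ 2) I s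
  hasDerivWithinAt_snd : ∀ s ∈ I, HasDerivWithinAt Y (X s * Y s * (d * X s - 1)) I s

theorem IsSubsystemSol.isSubsystemSolWithin {d : ℕ} {X Y : ℝ → ℝ} {I : Set ℝ}
    (h : IsSubsystemSol d X Y I) : IsSubsystemSolWithin d X Y I where
  hasDerivWithinAt_fst s hs := (h.1 s hs).hasDerivWithinAt
  hasDerivWithinAt_snd s hs := (h.2 s hs).hasDerivWithinAt

namespace IsSubsystemSolWithin

open Set

variable {d a : ℝ} {X Y : ℝ → ℝ} {I J : Set ℝ}

theorem mono (h : IsSubsystemSolWithin d X Y I) (hJ : J ⊆ I) : IsSubsystemSolWithin d X Y J where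
  hasDerivWithinAt_fst s hs := (h.hasDerivWithinAt_fst s (hJ hs)).mono hJ
  hasDerivWithinAt_snd s hs := (h.hasDerivWithinAt_snd s (hJ hs)).mono hJ

theorem hasDerivWithinAt_scalarCurvature (h : IsSubsystemSolWithin d X Y I) :
    ∀ s ∈ I, HasDerivWithinAt (fun s ↦ scalarCurvature d (X s) (Y s))
      (2 * d * X s * (1 - d * X s) ^ 2 +
        (2 * d * X s + 2 * d * X s ^ 2 - 2) * scalarCurvature d (X s) (Y s)) I s := by
  intro s hs
  have hX := h.hasDerivWithinAt_fst s hs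
  have hY := h.hasDerivWithinAt_snd s hs
  refine (((hX.const_mul (2 * d)).sub ((hX.pow 2).const_mul (d * (d + 1)))).sub
    ((hY.pow 2).const_mul (d * (d - 1)))).congr_deriv ?_
  unfold scalarCurvature
  ring

theorem antitoneOn_snd_sq (h : IsSubsystemSolWithin d X Y I) (hI : Convex ℝ I)
    (hX : ∀ s ∈ I, 0 ≤ X s) (hdX : ∀ s ∈ I, d * X s ≤ 1) : AntitoneOn (fun s ↦ Y s ^ 2) I := by
  have hderiv : ∀ s ∈ I,
      HasDerivWithinAt (fun s ↦ Y s ^ 2) (2 * X s * Y s ^ 2 * (d * X s - 1)) I s := fun s hs ↦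
    ((h.hasDerivWithinAt_snd s hs).fun_pow 2).congr_deriv (by ring)
  refine antitoneOn_of_hasDerivWithinAt_nonpos hI (HasDerivWithinAt.continuousOn hderiv)
    (fun s hs ↦ (hderiv s (interior_subset hs)).mono interior_subset) fun s hs ↦ ?_
  have hXs := hX s (interior_subset hs)
  exact mul_nonpos_of_nonneg_of_nonpos (by positivity)
    (sub_nonpos.2 (hdX s (interior_subset hs)))

theorem fst_pos (h : IsSubsystemSolWithin d X Y (Ici a)) (hd : 1 ≤ d) (hX : 0 < X a) :
    ∀ s ∈ Ici a, 0 < X s := by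
  refine pos_of_mul_le_deriv (K := -1) h.hasDerivWithinAt_fst hX fun s hs hpos ↦ ?_
  have hXs : 0 < X s := hpos s (right_mem_Icc.2 hs)
  have cubic_nonneg : 0 ≤ d * X s ^ 3 := by positivity
  have quadratic_nonneg : 0 ≤ (d - 1) * Y s ^ 2 := mul_nonneg (by linarith) (sq_nonneg _)
  linarith

theorem mul_snd_sq_le_one (h : IsSubsystemSolWithin d X Y I) (hI : Convex ℝ I)
    (hX : ∀ s ∈ I, 0 ≤ X s) (hdX : ∀ s ∈ I, d * X s ≤ 1) (ha : a ∈ I) (hY : (d * Y a) ^ 2 ≤ 1) :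
    ∀ s ∈ I, a ≤ s → (d * Y s) ^ 2 ≤ 1 := by
  intro s hs has
  have hanti : Y s ^ 2 ≤ Y a ^ 2 := h.antitoneOn_snd_sq hI hX hdX ha hs has
  calc (d * Y s) ^ 2 = d ^ 2 * Y s ^ 2 := mul_pow ..
    _ ≤ d ^ 2 * Y a ^ 2 := by gcongr
    _ = (d * Y a) ^ 2 := (mul_pow ..).symm
    _ ≤ 1 := hY

theorem mul_fst_lt_one (h : IsSubsystemSolWithin d X Y (Ici a)) (hd : 1 ≤ d) (hX : 0 < X a)
    (hdX : d * X a < 1) (hY : (d * Y a) ^ 2 ≤ 1) : ∀ s ∈ Ici a, d * X s < 1 := by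
  have hpos := h.fst_pos hd hX
  suffices ∀ s ∈ Ici a, 0 < 1 - d * X s from fun s hs ↦ sub_pos.1 (this s hs)
  refine pos_of_mul_le_deriv (K := -1)
    (fun s hs ↦ ((h.hasDerivWithinAt_fst s hs).const_mul d).const_sub 1) (sub_pos.2 hdX)
    fun s hs hlt ↦ ?_
  have hYs : (d * Y s) ^ 2 ≤ 1 :=
    (h.mono Icc_subset_Ici_self).mul_snd_sq_le_one (convex_Icc a s) (fun t ht ↦ (hpos t ht.1).le)
      (fun t ht ↦ (sub_pos.1 (hlt t ht)).le) (left_mem_Icc.2 hs) hY s (right_mem_Icc.2 hs) hs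
  have hXs := hpos s hs
  have hlts := hlt s (right_mem_Icc.2 hs)
  have key : d * (-(d * (X s * (d * X s ^ 2 - 1) + (d - 1) * Y s ^ 2)) + (1 - d * X s)) =
      (1 - d * X s) * ((d * X s) ^ 2 + d * X s + 1) + (d - 1) * (1 - (d * Y s) ^ 2) := by
    ring
  have hnonneg :
      0 ≤ d * (-(d * (X s * (d * X s ^ 2 - 1) + (d - 1) * Y s ^ 2)) + (1 - d * X s)) := by
    rw [key]
    exact add_nonneg (mul_nonneg hlts.le (by positivity))
      (mul_nonneg (by linarith) (by linarith))
  linarith [nonneg_of_mul_nonneg_right hnonneg (by linarith : 0 < d)]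

theorem scalarCurvature_pos (h : IsSubsystemSolWithin d X Y (Ici a)) (hd : 0 ≤ d)
    (hX : ∀ s ∈ Ici a, 0 ≤ X s) (hR : 0 < scalarCurvature d (X a) (Y a)) :
    ∀ s ∈ Ici a, 0 < scalarCurvature d (X s) (Y s) := by
  refine pos_of_mul_le_deriv (K := -2) h.hasDerivWithinAt_scalarCurvature hR fun s hs hpos ↦ ?_
  have hXs := hX s hs
  have hRs := hpos s (right_mem_Icc.2 hs)
  have source_nonneg : 0 ≤ 2 * d * X s * (1 - d * X s) ^ 2 := by positivity
  have growth_nonneg :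
      0 ≤ (2 * d * X s + 2 * d * X s ^ 2) * scalarCurvature d (X s) (Y s) := by positivity
  linarith

theorem exists_scalarCurvature_pos (h : IsSubsystemSolWithin d X Y (Ici a)) (hd : 1 ≤ d)
    (hX : 0 < X a) (hdX : d * X a < 1) (hY : (d * Y a) ^ 2 ≤ 1) :
    ∃ s ∈ Ici a, 0 < scalarCurvature d (X s) (Y s) := by
  by_contra! hR
  have hpos := h.fst_pos hd hX
  have hlt := h.mul_fst_lt_one hd hX hdX hY
  have hYs := h.mul_snd_sq_le_one (convex_Ici a) (fun s hs ↦ (hpos s hs).le)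
    (fun s hs ↦ (hlt s hs).le) self_mem_Ici hY
  have hgrowth : ∀ s ∈ Ici a, X a * Real.exp ((2 / (d + 1)) ^ 2 * (s - a)) ≤ X s := fun s hs ↦
    mul_exp_le_of_mul_le_deriv_right hs
      ((HasDerivWithinAt.continuousOn h.hasDerivWithinAt_fst).mono Icc_subset_Ici_self)
      (fun t ht ↦ (h.hasDerivWithinAt_fst t ht.1).mono (Ici_subset_Ici.2 ht.1))
      fun t ht ↦ sq_mul_le_of_scalarCurvature_nonpos hd (hpos t ht.1).le (hlt t ht.1)
        (hYs t ht.1 ht.1) (hR t ht.1)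
  have hrate : 0 < (2 / (d + 1)) ^ 2 := by positivity
  have hunbounded : Tendsto (fun s ↦ X a * Real.exp ((2 / (d + 1)) ^ 2 * (s - a))) atTop atTop :=
    (Real.tendsto_exp_atTop.comp
      ((tendsto_atTop_add_const_right atTop (-a) tendsto_id).const_mul_atTop hrate)).const_mul_atTop
        hX
  obtain ⟨s, hs_large, has⟩ :=
    ((hunbounded.eventually_ge_atTop 1).and (eventually_ge_atTop a)).exists
  have hXs : 1 ≤ X s := hs_large.trans (hgrowth s has)
  exact (hlt s has).not_ge (hXs.trans (le_mul_of_one_le_left (hpos s has).le hd))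

end IsSubsystemSolWithin

theorem stmt_6_general {d s₀ : ℝ} (hd : 1 ≤ d) {X Y : ℝ → ℝ}
    (hsol : IsSubsystemSolWithin d X Y (Set.Ici s₀))
    (hX₀ : 0 < X s₀ ∧ X s₀ < 1 / d) (hY₀ : |Y s₀| ≤ 1 / d) :
    ∃ s₂ ≥ s₀, ∀ s ≥ s₂, 0 < scalarCurvature d (X s) (Y s) := by
  have hd₀ : 0 < d := by linarith
  have hdX : d * X s₀ < 1 := (lt_div_iff₀' hd₀).1 hX₀.2
  have hdY : (d * Y s₀) ^ 2 ≤ 1 := by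
    rw [sq_le_one_iff_abs_le_one, abs_mul, abs_of_pos hd₀]
    exact (le_div_iff₀' hd₀).1 hY₀
  obtain ⟨s₂, hs₂, hR⟩ := hsol.exists_scalarCurvature_pos hd hX₀.1 hdX hdY
  have htail : Set.Ici s₂ ⊆ Set.Ici s₀ := Set.Ici_subset_Ici.2 hs₂
  exact ⟨s₂, hs₂, (hsol.mono htail).scalarCurvature_pos hd₀.le
    (fun s hs ↦ (hsol.fst_pos hd hX₀.1 s (htail hs)).le) hR⟩

/-- Along trajectories in the region `0 < X, Y < 1/d`, the renormalized scalar
curvature `ℛ = 2dX − d(d+1)X² − d(d−1)Y²` is eventually positive. -/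
theorem stmt_6 (d : ℕ) (hd : 2 ≤ d) (s₀ : ℝ) (X Y : ℝ → ℝ)
    (hsol : IsSubsystemSol d X Y (Set.Ici s₀))
    (hX₀ : 0 < X s₀ ∧ X s₀ < 1 / d) (hY₀ : 0 < Y s₀ ∧ Y s₀ < 1 / d) :
    ∃ s₂ ≥ s₀, ∀ s > s₂,
      0 < 2 * (d : ℝ) * X s - (d : ℝ) * ((d : ℝ) + 1) * X s ^ 2
          - (d : ℝ) * ((d : ℝ) - 1) * Y s ^ 2 := by
  obtain ⟨s₂, hs₂, hpos⟩ := stmt_6_general (Nat.one_le_cast.2 (by lia))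
    hsol.isSubsystemSolWithin hX₀ (abs_le.2 ⟨by linarith, hY₀.2.le⟩)
  exact ⟨s₂, hs₂, fun s hs ↦ hpos s hs.le⟩
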